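/- MSO model-checking of effect trees generated by closed HEPCF computations is undecidable: there is no algorithm that, given a closed HEPCF computation C and an MSO formula (or APT) φ, decides whether ET(C) ⊨ φ. -/

import Mathlib

/-! HEPCF: EPCF extended with effect handlers. A handler consists of a return
clause `Cr` (binding the returned value, de Bruijn index 0) and, for each
operation `σ`, a clause `Hop σ` binding the parameter `x` (index 1) and the
continuation `r` (index 0). -/

namespace HEPCF

mutual
/-- HEPCF values (de Bruijn representation). -/
inductive HVal (CV Op : Type) : Type
  | cv : CV → HVal CV Op
  | num : ℕ → ℕ → HVal CV Op
  | var : ℕ → HVal CV Op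
  | lam : HComp CV Op → HVal CV Op
  | fixv : HVal CV Op → HVal CV Op
/-- HEPCF computations (de Bruijn representation). -/
inductive HComp (CV Op : Type) : Type
  | app : HVal CV Op → HVal CV Op → HComp CV Op
  | ret : HVal CV Op → HComp CV Op
  | letin : HComp CV Op → HComp CV Op → HComp CV Op
  | opc : Op → HVal CV Op → HComp CV Op → HComp CV Op
  | case : (k : ℕ) → HVal CV Op → (Fin k → HComp CV Op) → HComp CV Op
  | handle : HComp CV Op → (Op → HComp CV Op) → HComp CV Op → HComp CV Op
end

variable {CV Op : Type}

/-- Lifting of a renaming under a binder. -/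
def upr (ρ : ℕ → ℕ) : ℕ → ℕ
  | 0 => 0
  | n + 1 => ρ n + 1

mutual
/-- Renaming of variables in values. -/
def renV (ρ : ℕ → ℕ) : HVal CV Op → HVal CV Op
  | .cv v => .cv v
  | .num n k => .num n k
  | .var n => .var (ρ n)
  | .lam C => .lam (renC (upr ρ) C)
  | .fixv V => .fixv (renV (upr ρ) V)
/-- Renaming of variables in computations. -/
def renC (ρ : ℕ → ℕ) : HComp CV Op → HComp CV Op
  | .app V W => .app (renV ρ V) (renV ρ W)
  | .ret V => .ret (renV ρ V)
  | .letin C B => .letin (renC ρ C) (renC (upr ρ) B)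
  | .opc σ V C => .opc σ (renV ρ V) (renC (upr ρ) C)
  | .case k V Cs => .case k (renV ρ V) (fun i => renC ρ (Cs i))
  | .handle Cr Hop C =>
      .handle (renC (upr ρ) Cr) (fun σ => renC (upr (upr ρ)) (Hop σ)) (renC ρ C)
end

/-- Lifting of a substitution under a binder. -/
def upsH (σ : ℕ → HVal CV Op) : ℕ → HVal CV Op
  | 0 => .var 0
  | n + 1 => renV Nat.succ (σ n)

mutual
/-- Simultaneous substitution of values for variables, in values. -/
def subV (σ : ℕ → HVal CV Op) : HVal CV Op → HVal CV Op
  | .cv v => .cv v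
  | .num n k => .num n k
  | .var n => σ n
  | .lam C => .lam (subC (upsH σ) C)
  | .fixv V => .fixv (subV (upsH σ) V)
/-- Simultaneous substitution of values for variables, in computations. -/
def subC (σ : ℕ → HVal CV Op) : HComp CV Op → HComp CV Op
  | .app V W => .app (subV σ V) (subV σ W)
  | .ret V => .ret (subV σ V)
  | .letin C B => .letin (subC σ C) (subC (upsH σ) B)
  | .opc op V C => .opc op (subV σ V) (subC (upsH σ) C)
  | .case k V Cs => .case k (subV σ V) (fun i => subC σ (Cs i))
  | .handle Cr Hop C =>
      .handle (subC (upsH σ) Cr) (fun op => subC (upsH (upsH σ)) (Hop op))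
        (subC σ C)
end

/-- Substitution `C[W/x]` of the value `W` for the variable `0`. -/
def subst0C (W : HVal CV Op) (C : HComp CV Op) : HComp CV Op :=
  subC (fun n => match n with | 0 => W | n + 1 => .var n) C

/-- Substitution `V[W/x]` of the value `W` for the variable `0`. -/
def subst0V (W : HVal CV Op) (V : HVal CV Op) : HVal CV Op :=
  subV (fun n => match n with | 0 => W | n + 1 => .var n) V

/-- The simultaneous substitution `[r := A, x := B]` used when a handler
catches an operation (`r` is the innermost bound variable). -/
def sub2 (A B : HVal CV Op) : ℕ → HVal CV Op
  | 0 => A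
  | 1 => B
  | n + 2 => .var n

/-- The value `λy. handle H C` passed as the captured continuation when the
handler `H = (Cr, Hop)` catches an operation with continuation `C`. -/
def contVal (Cr : HComp CV Op) (Hop : Op → HComp CV Op) (C : HComp CV Op) :
    HVal CV Op :=
  .lam (.handle (renC (upr Nat.succ) Cr)
    (fun σ => renC (upr (upr Nat.succ)) (Hop σ)) C)

/-- The reduction relation of HEPCF. -/
inductive HStep : HComp CV Op → HComp CV Op → Prop
  | beta (C : HComp CV Op) (W : HVal CV Op) :
      HStep (.app (.lam C) W) (subst0C W C)
  | fix (V W : HVal CV Op) :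
      HStep (.app (.fixv V) W) (.app (subst0V (.fixv V) V) W)
  | case {n k : ℕ} (h : n < k) (Cs : Fin k → HComp CV Op) :
      HStep (.case k (.num n k) Cs) (Cs ⟨n, h⟩)
  | letRet (V : HVal CV Op) (C : HComp CV Op) :
      HStep (.letin (.ret V) C) (subst0C V C)
  | letCong {C C' : HComp CV Op} (B : HComp CV Op) :
      HStep C C' → HStep (.letin C B) (.letin C' B)
  | letOp (σ : Op) (V : HVal CV Op) (C D : HComp CV Op) :
      HStep (.letin (.opc σ V C) D) (.opc σ V (.letin C (renC (upr Nat.succ) D)))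
  | hCong {C C' : HComp CV Op} (Cr : HComp CV Op) (Hop : Op → HComp CV Op) :
      HStep C C' → HStep (.handle Cr Hop C) (.handle Cr Hop C')
  | hRet (Cr : HComp CV Op) (Hop : Op → HComp CV Op) (V : HVal CV Op) :
      HStep (.handle Cr Hop (.ret V)) (subst0C V Cr)
  | hOp (Cr : HComp CV Op) (Hop : Op → HComp CV Op) (σ : Op)
      (V : HVal CV Op) (C : HComp CV Op) :
      HStep (.handle Cr Hop (.opc σ V C))
        (subC (sub2 (contVal Cr Hop C) V) (Hop σ))

end HEPCF

namespace HEPCF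

/-- HEPCF types: base types, enumeration types, and effect-annotated arrows
`T →_E U` where `E` is a set of operations. -/
inductive HTy (BV Op : Type) : Type
  | base : BV → HTy BV Op
  | enum : ℕ → HTy BV Op
  | arr : HTy BV Op → Set Op → HTy BV Op → HTy BV Op

section Typing

variable {BV CV Op : Type} (cvTy : CV → BV) (opPar : Op → BV) (opAr : Op → ℕ)

mutual
/-- Typing judgment for HEPCF values. -/
inductive HVTy : List (HTy BV Op) → HVal CV Op → HTy BV Op → Prop
  | cv {Γ} (v : CV) : HVTy Γ (.cv v) (.base (cvTy v))
  | num {Γ n k} : n < k → HVTy Γ (.num n k) (.enum k)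
  | var {Γ n T} : Γ[n]? = some T → HVTy Γ (.var n) T
  | lam {Γ C T E U} : HCTy (T :: Γ) E C U → HVTy Γ (.lam C) (.arr T E U)
  | fixv {Γ V T E U} : HVTy ((HTy.arr T E U) :: Γ) V (.arr T E U) →
      HVTy Γ (.fixv V) (.arr T E U)
/-- Typing judgment `Γ ⊢_E C : T` for HEPCF computations. The rule for
`handle` types the return clause and the clauses for the handled operations
`E'` (the clause for `σᵢ` binds the parameter `x : Bᵢ` and the continuation
`r : kᵢ →_E T`). -/
inductive HCTy : List (HTy BV Op) → Set Op → HComp CV Op → HTy BV Op → Prop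
  | app {Γ E V W T U} : HVTy Γ V (.arr T E U) → HVTy Γ W T →
      HCTy Γ E (.app V W) U
  | ret {Γ E V T} : HVTy Γ V T → HCTy Γ E (.ret V) T
  | letin {Γ E C B T U} : HCTy Γ E C T → HCTy (T :: Γ) E B U →
      HCTy Γ E (.letin C B) U
  | opc {Γ E σ V C T} : σ ∈ E → HVTy Γ V (.base (opPar σ)) →
      HCTy ((HTy.enum (opAr σ)) :: Γ) E C T → HCTy Γ E (.opc σ V C) T
  | case {Γ E k V T} {Cs : Fin k → HComp CV Op} : HVTy Γ V (.enum k) →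
      (∀ i, HCTy Γ E (Cs i) T) → HCTy Γ E (.case k V Cs) T
  | handle {Γ E C Cr Hop T U} {E' : Set Op} :
      HCTy Γ E' C U →
      HCTy (U :: Γ) E Cr T →
      (∀ σ ∈ E',
        HCTy ((HTy.arr (.enum (opAr σ)) E T) :: (HTy.base (opPar σ)) :: Γ)
          E (Hop σ) T) →
      HCTy Γ E (.handle Cr Hop C) T
end

end Typing

end HEPCF

namespace HEPCF

/-- Labels of effect trees of HEPCF computations: operation nodes, parameter
leaves (constant values), and return leaves. -/
inductive HLab (CV Op : Type) : Type
  | opl : Op → HLab CV Op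
  | cvl : CV → HLab CV Op
  | retl : HVal CV Op → HLab CV Op

variable {CV Op : Type}

/-- An HEPCF computation diverges when its reduction never terminates. -/
def HDiverges (C : HComp CV Op) : Prop :=
  ∀ D, Relation.ReflTransGen HStep C D → ∃ D', HStep D D'

/-- The effect tree `ET(C)` of an HEPCF computation, described position by
position: `ETAt opAr C p l` holds when `ET(C)` carries label `l` at
position `p` (`none` standing for `⊥`). An operation `σ : B ⇝ k` is a node
of arity `k+1` whose child `0` is a leaf carrying the parameter. -/
inductive ETAt (opAr : Op → ℕ) : HComp CV Op → List ℕ → Option (HLab CV Op) → Prop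
  | bot {C} : HDiverges C → ETAt opAr C [] none
  | retn {C V} : Relation.ReflTransGen HStep C (.ret V) →
      ETAt opAr C [] (some (.retl V))
  | opHead {C σ V C'} : Relation.ReflTransGen HStep C (.opc σ V C') →
      ETAt opAr C [] (some (.opl σ))
  | opParam {C σ v C'} :
      Relation.ReflTransGen HStep C (.opc σ (.cv v) C') →
      ETAt opAr C [0] (some (.cvl v))
  | opChild {C σ V C' i p l} :
      Relation.ReflTransGen HStep C (.opc σ V C') → i < opAr σ →
      ETAt opAr (subst0C (.num i (opAr σ)) C') p l →
      ETAt opAr C ((i + 1) :: p) l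

end HEPCF

/-! Alternating parity tree automata over (possibly infinite) ranked trees.
Trees over a signature `L` with arities `ar : L → ℕ` are represented by their
labelling function on positions (lists of child indices): `none` means the
position does not exist, `some none` is the unproductive tree `⊥`, and
`some (some l)` is a node labelled by the constructor `l`. -/

/-- Positive Boolean formulas over a set of variables `X`. -/
inductive PBF (X : Type) : Type
  | tt : PBF X
  | ff : PBF X
  | var : X → PBF X
  | and : PBF X → PBF X → PBF X
  | or : PBF X → PBF X → PBF X

/-- Satisfaction of a positive Boolean formula by a set `Y` of variables. -/
def PBF.Sat {X : Type} (Y : Set X) : PBF X → Prop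
  | .tt => True
  | .ff => False
  | .var x => x ∈ Y
  | .and φ ψ => PBF.Sat Y φ ∧ PBF.Sat Y ψ
  | .or φ ψ => PBF.Sat Y φ ∨ PBF.Sat Y ψ

/-- Trees over the signature `L`, as partial labelling functions on positions. -/
def TreeF (L : Type) : Type := List ℕ → Option (Option L)

/-- Well-formedness of a labelling function: the root exists, and a position
`p ++ [i]` exists iff `p` carries a constructor `l` with `i < ar l`
(`⊥`-nodes have no children). -/
def IsTree {L : Type} (ar : L → ℕ) (t : TreeF L) : Prop :=
  (t []).isSome ∧
    ∀ p i, (t (p ++ [i])).isSome ↔ ∃ l, t p = some (some l) ∧ i < ar l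

/-- An alternating parity tree automaton over the signature `L` with states
`Q`: transition function, initial state, and priority function. -/
structure APT (L Q : Type) : Type where
  δ : Q → L → PBF (ℕ × Q)
  qI : Q
  Ω : Q → ℕ

namespace APT

variable {L Q : Type}

/-- The current state of a node of a run-tree (the run-tree node is identified
by the list of moves `(child index, state)` leading to it from the root). -/
def stateOf (A : APT L Q) (r : List (ℕ × Q)) : Q :=
  (r.getLast?).elim A.qI Prod.snd

/-- `R` is a run-tree of the automaton `A` over the tree `t`: it contains the
root `(ε, qI)`, and every node `(α, q)` of `R` comes with a set `S` of
moves satisfying the transition formula `δ(q, t(α))`, all of whose elements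
are children of the node in `R`. -/
def IsRun (ar : L → ℕ) (t : TreeF L) (A : APT L Q)
    (R : Set (List (ℕ × Q))) : Prop :=
  [] ∈ R ∧
    ∀ r ∈ R, ∃ (f : L) (S : Set (ℕ × Q)),
      t (r.map Prod.fst) = some (some f) ∧
      (∀ x ∈ S, x.1 < ar f) ∧
      PBF.Sat S (A.δ (A.stateOf r) f) ∧
      ∀ x ∈ S, r ++ [x] ∈ R

/-- An infinite branch of a run-tree. -/
def IsBranch (R : Set (List (ℕ × Q))) (b : ℕ → ℕ × Q) : Prop :=
  ∀ n, (List.ofFn fun i : Fin n => b i) ∈ R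

/-- The parity condition along an infinite branch: the largest priority
occurring infinitely often is even. -/
def ParityOK (A : APT L Q) (b : ℕ → ℕ × Q) : Prop :=
  ∃ m, Even m ∧ {n | A.Ω (b n).2 = m}.Infinite ∧
    ∀ m' > m, {n | A.Ω (b n).2 = m'}.Finite

/-- Acceptance: there exists a run-tree all of whose infinite branches
satisfy the parity condition. -/
def Accepts (ar : L → ℕ) (A : APT L Q) (t : TreeF L) : Prop :=
  ∃ R, IsRun ar t A R ∧ ∀ b, IsBranch R b → ParityOK A b

end APT

/-! Undecidability of MSO (APT) model-checking for effect trees of HEPCF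
computations. We work over the concrete finitary signature with a single base
type `Unit`, a single constant value `()` and a single operation
`σ : Unit ⇝ 1` (`CV = BV = Op = Unit`), and explicitly encode programs and
automata (with finitely presented transition tables) as natural numbers. -/

namespace HEPCF

/-- Base-type assignment of the fixed signature. -/
def cvTyU : Unit → Unit := fun _ => ()

/-- Parameter types of the fixed signature. -/
def opParU : Unit → Unit := fun _ => ()

/-- Arities of the fixed signature: `σ : Unit ⇝ 1`. -/
def opArU : Unit → ℕ := fun _ => 1

/-- Arities of effect-tree labels: an operation node has its parameter leaf
as extra first child; parameter and return leaves have no children. -/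
def arH : HLab Unit Unit → ℕ
  | .opl _ => 2
  | .cvl _ => 0
  | .retl _ => 0

mutual
/-- An explicit numeric encoding of HEPCF values. -/
def encV : HVal Unit Unit → ℕ
  | .cv _ => Nat.pair 0 0
  | .num n k => Nat.pair 1 (Nat.pair n k)
  | .var n => Nat.pair 2 n
  | .lam C => Nat.pair 3 (encC C)
  | .fixv V => Nat.pair 4 (encV V)
/-- An explicit numeric encoding of HEPCF computations. -/
def encC : HComp Unit Unit → ℕ
  | .app V W => Nat.pair 5 (Nat.pair (encV V) (encV W))
  | .ret V => Nat.pair 6 (encV V)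
  | .letin C B => Nat.pair 7 (Nat.pair (encC C) (encC B))
  | .opc _ V C => Nat.pair 8 (Nat.pair (encV V) (encC C))
  | .case k V Cs =>
      Nat.pair 9 (Nat.pair k (Nat.pair (encV V)
        (Encodable.encode (List.ofFn fun i : Fin k => encC (Cs i)))))
  | .handle Cr Hop C =>
      Nat.pair 10 (Nat.pair (encC Cr) (Nat.pair (encC (Hop ())) (encC C)))
end

/-- Numeric encoding of effect-tree labels. -/
def encLab : HLab Unit Unit → ℕ
  | .opl _ => Nat.pair 0 0
  | .cvl _ => Nat.pair 1 0
  | .retl V => Nat.pair 2 (encV V)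

/-- Numeric encoding of positive Boolean formulas over `ℕ × ℕ`. -/
def encPBF : PBF (ℕ × ℕ) → ℕ
  | .tt => Nat.pair 0 0
  | .ff => Nat.pair 1 0
  | .var x => Nat.pair 2 (Nat.pair x.1 x.2)
  | .and φ ψ => Nat.pair 3 (Nat.pair (encPBF φ) (encPBF ψ))
  | .or φ ψ => Nat.pair 4 (Nat.pair (encPBF φ) (encPBF ψ))

/-- A finitely presented alternating parity tree automaton over effect-tree
labels: states are natural numbers, and the transition table and priority
function are given by finite association lists (keys of the transition table
are pairs `(state, label code)`). -/
structure APTCode : Type where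
  qI : ℕ
  δ : List ((ℕ × ℕ) × PBF (ℕ × ℕ))
  Ω : List (ℕ × ℕ)

/-- The APT denoted by a finitely presented automaton. -/
def APTCode.toAPT (A : APTCode) : APT (HLab Unit Unit) ℕ where
  δ q l := ((A.δ.lookup (q, encLab l)).getD .ff)
  qI := A.qI
  Ω q := (A.Ω.lookup q).getD 0

/-- Numeric encoding of finitely presented automata. -/
def encAPT (A : APTCode) : ℕ :=
  Nat.pair A.qI (Nat.pair
    (Encodable.encode (A.δ.map fun e =>
      Nat.pair (Nat.pair e.1.1 e.1.2) (encPBF e.2)))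
    (Encodable.encode (A.Ω.map fun e => Nat.pair e.1 e.2)))

/-- The effect tree of an HEPCF computation, as a labelling function on
positions (defined from the relation `ETAt`, using choice). -/
noncomputable def ETF (C : HComp Unit Unit) : TreeF (HLab Unit Unit) :=
  open scoped Classical in
  fun p => if h : ∃ l, ETAt opArU C p l then some h.choose else none

end HEPCF

namespace HEPCF

/-! ### Determinism of reduction -/

theorem HStep.det {C D D' : HComp Unit Unit} (h : HStep C D) (h' : HStep C D') : D = D' := by
  induction h generalizing D' with
  | beta => cases h'; rfl
  | fix => cases h'; rfl
  | case => cases h'; rfl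
  | letRet =>
    cases h' with
    | letRet => rfl
    | letCong _ h => cases h
  | letCong B h ih =>
    cases h' with
    | letRet => cases h
    | letCong _ h => rw [ih h]
    | letOp => cases h
  | letOp =>
    cases h' with
    | letCong _ h => cases h
    | letOp => rfl
  | hCong Cr Hop h ih =>
    cases h' with
    | hCong _ _ h => rw [ih h]
    | hRet => cases h
    | hOp => cases h
  | hRet =>
    cases h' with
    | hCong _ _ h => cases h
    | hRet => rfl
  | hOp =>
    cases h' with
    | hCong _ _ h => cases h
    | hOp => rfl

abbrev Vl := HVal Unit Unit
abbrev Cm := HComp Unit Unit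

/-- Many-step reduction. -/
abbrev Red (C D : Cm) : Prop := Relation.ReflTransGen HStep C D
/-- Reduction in at least one step. -/
abbrev RedP (C D : Cm) : Prop := Relation.TransGen HStep C D

def NF (D : Cm) : Prop := ∀ D', ¬ HStep D D'

theorem nf_ret (V : Vl) : NF (.ret V) := by intro D h; cases h
theorem nf_opc (s : Unit) (V : Vl) (C : Cm) : NF (.opc s V C) := by intro D h; cases h

theorem Red.conf {C D N : Cm} (hN : NF N) (h : Red C N) (h' : Red C D) : Red D N := by
  induction h' using Relation.ReflTransGen.head_induction_on with
  | refl => exact h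
  | head h1 _ ih =>
    apply ih
    rcases Relation.ReflTransGen.cases_head h with e | ⟨c, hc, hr⟩
    · subst e; exact absurd h1 (hN _)
    · rw [HStep.det h1 hc]; exact hr

theorem Red.nf_unique {C N N' : Cm} (hN : NF N) (hN' : NF N') (h : Red C N) (h' : Red C N') :
    N = N' := by
  have := Red.conf hN h h'
  rcases Relation.ReflTransGen.cases_head this with e | ⟨c, hc, _⟩
  · exact e.symm
  · exact absurd hc (hN' _)

theorem Red.letin {C D : Cm} (B : Cm) (h : Red C D) : Red (.letin C B) (.letin D B) := by
  induction h with
  | refl => exact .refl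
  | tail _ h ih => exact ih.tail (.letCong _ h)

theorem RedP.letin {C D : Cm} (B : Cm) (h : RedP C D) : RedP (.letin C B) (.letin D B) := by
  induction h with
  | single h => exact .single (.letCong _ h)
  | tail _ h ih => exact ih.tail (.letCong _ h)

theorem Red.handle {C D : Cm} (Cr : Cm) (H : Unit → Cm) (h : Red C D) :
    Red (.handle Cr H C) (.handle Cr H D) := by
  induction h with
  | refl => exact .refl
  | tail _ h ih => exact ih.tail (.hCong _ _ h)

/-! ### Closed values -/

/-- Values invariant under renaming and substitution. -/
structure Cl (V : Vl) : Prop where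
  ren : ∀ ρ, renV ρ V = V
  sub : ∀ s, subV s V = V

/-- Two-way branching. -/
def case2 (V : Vl) (A B : Cm) : Cm := .case 2 V ![A, B]

theorem ren_case2 (ρ : ℕ → ℕ) (V : Vl) (A B : Cm) :
    renC ρ (case2 V A B) = case2 (renV ρ V) (renC ρ A) (renC ρ B) := by
  simp only [case2, renC]
  congr 1
  funext i
  fin_cases i <;> rfl

theorem sub_case2 (s : ℕ → Vl) (V : Vl) (A B : Cm) :
    subC s (case2 V A B) = case2 (subV s V) (subC s A) (subC s B) := by
  simp only [case2, subC]
  congr 1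
  funext i
  fin_cases i <;> rfl

theorem step_case2_0 (A B : Cm) : HStep (case2 (.num 0 2) A B) A := by
  have h : 0 < 2 := by decide
  exact HStep.case h ![A, B]

theorem step_case2_1 (A B : Cm) : HStep (case2 (.num 1 2) A B) B := by
  have h : 1 < 2 := by decide
  exact HStep.case h ![A, B]

/-! ### Term builders -/


/-- the numeral zero -/
def zeroV : Vl := .lam (.ret (.cv ()))
/-- successor of a numeral -/
def succV (a : Vl) : Vl :=
  .lam (.opc () (.cv ()) (.app (renV Nat.succ (renV Nat.succ a)) (.num 0 1)))
/-- zero test -/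
def isz (a : Vl) : Cm :=
  .handle (.ret (.num 0 2)) (fun _ => .ret (.num 1 2)) (.app a (.num 0 1))
/-- return clause of the predecessor handler -/
def PCr : Cm := .ret (.lam (.ret (.cv ())))
/-- operation clause of the predecessor handler -/
def PH : Cm := .letin (.app (.var 0) (.num 0 1))
  (.ret (.lam (case2 (.var 0) (.app (.var 1) (.num 1 2))
    (.opc () (.cv ()) (.app (.var 2) (.num 1 2))))))
/-- predecessor -/
def predV (a : Vl) : Vl :=
  .lam (.letin (.handle PCr (fun _ => PH) (.app (renV Nat.succ a) (.num 0 1)))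
    (.app (.var 0) (.num 0 2)))
/-- stream cons -/
def consV (a b : Vl) : Vl :=
  .lam (.letin (isz (.var 0)) (case2 (.var 0)
    (.ret (renV Nat.succ (renV Nat.succ a)))
    (.app (renV Nat.succ (renV Nat.succ b)) (predV (.var 1)))))
/-- stream tail -/
def tailV (a : Vl) : Vl := .lam (.app (renV Nat.succ a) (succV (.var 0)))
/-- constantly zero stream -/
def zerosV : Vl := .lam (.ret zeroV)

theorem ren_PCr (ρ : ℕ → ℕ) : renC (upr ρ) PCr = PCr := rfl
theorem sub_PCr (s : ℕ → Vl) : subC (upsH s) PCr = PCr := rfl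
theorem ren_PH (ρ : ℕ → ℕ) : renC (upr (upr ρ)) PH = PH := by
  simp [PH, renC, renV, ren_case2, upr]
theorem sub_PH (s : ℕ → Vl) : subC (upsH (upsH s)) PH = PH := by
  simp [PH, subC, subV, sub_case2, upsH, renV]

theorem cl_zeroV : Cl zeroV := ⟨fun _ => rfl, fun _ => rfl⟩
theorem cl_zerosV : Cl zerosV := ⟨fun _ => rfl, fun _ => rfl⟩

theorem cl_succV {a : Vl} (h : Cl a) : Cl (succV a) := by
  constructor <;> intro s <;> simp [succV, h.ren, h.sub, renV, renC, subV, subC]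
theorem ren_succV (ρ : ℕ → ℕ) (n : ℕ) : renV ρ (succV (.var n)) = succV (.var (ρ n)) := rfl
theorem sub_succV (s : ℕ → Vl) (n : ℕ) : subV s (succV (.var n)) = succV (s n) := rfl

theorem ren_isz (ρ : ℕ → ℕ) (a : Vl) : renC ρ (isz a) = isz (renV ρ a) := rfl
theorem sub_isz (s : ℕ → Vl) (a : Vl) : subC s (isz a) = isz (subV s a) := rfl

theorem cl_predV {a : Vl} (h : Cl a) : Cl (predV a) := by
  constructor <;> intro s <;>
    simp [predV, h.ren, h.sub, renV, renC, subV, subC, ren_PCr, sub_PCr, ren_PH, sub_PH, upr, upsH]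
theorem ren_predV (ρ : ℕ → ℕ) (n : ℕ) : renV ρ (predV (.var n)) = predV (.var (ρ n)) := by
  simp [predV, renV, renC, ren_PCr, ren_PH, upr]
theorem sub_predV (s : ℕ → Vl) (n : ℕ) : subV s (predV (.var n)) = predV (s n) := by
  simp [predV, renV, subV, subC, sub_PCr, sub_PH, upsH]

theorem cl_tailV {a : Vl} (h : Cl a) : Cl (tailV a) := by
  constructor <;> intro s <;> simp [tailV, h.ren, h.sub, renV, renC, subV, subC, ren_succV,
    sub_succV, upr, upsH]
theorem ren_tailV (ρ : ℕ → ℕ) (n : ℕ) : renV ρ (tailV (.var n)) = tailV (.var (ρ n)) := rfl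
theorem sub_tailV (s : ℕ → Vl) (n : ℕ) : subV s (tailV (.var n)) = tailV (s n) := rfl

theorem cl_consV {a b : Vl} (h : Cl a) (hb : Cl b) : Cl (consV a b) := by
  constructor <;> intro s <;> simp [consV, h.ren, h.sub, hb.ren, hb.sub, renV, renC, subV, subC,
    ren_isz, sub_isz, ren_case2, sub_case2, ren_predV, sub_predV, upr, upsH]

/-- Values for which lifting commutes with substitution `s`/renaming. -/
theorem sub_consV (s : ℕ → Vl) (a b : Vl)
    (ha : subV (upsH (upsH s)) (renV Nat.succ (renV Nat.succ a)) =
      renV Nat.succ (renV Nat.succ (subV s a)))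
    (hb : subV (upsH (upsH s)) (renV Nat.succ (renV Nat.succ b)) =
      renV Nat.succ (renV Nat.succ (subV s b))) :
    subV s (consV a b) = consV (subV s a) (subV s b) := by
  simp [consV, ha, hb, subV, subC, sub_isz, sub_case2, sub_predV, upsH, renV]

theorem ren_consV (s : ℕ → ℕ) (a b : Vl)
    (ha : renV (upr (upr s)) (renV Nat.succ (renV Nat.succ a)) =
      renV Nat.succ (renV Nat.succ (renV s a)))
    (hb : renV (upr (upr s)) (renV Nat.succ (renV Nat.succ b)) =
      renV Nat.succ (renV Nat.succ (renV s b))) :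
    renV s (consV a b) = consV (renV s a) (renV s b) := by
  simp [consV, ha, hb, renV, renC, ren_isz, ren_case2, ren_predV, upr]

/-! ### Numerals -/

/-- The computation `M` performs exactly `n` operations and returns. -/
def NatC : ℕ → Cm → Prop
  | 0, M => Red M (.ret (.cv ()))
  | n + 1, M => ∃ C', Red M (.opc () (.cv ()) C') ∧ NatC n (subst0C (.num 0 1) C')

theorem NatC.red {n : ℕ} {M M' : Cm} (h : Red M M') (h' : NatC n M') : NatC n M := by
  cases n with
  | zero => exact h.trans h'
  | succ n =>
    obtain ⟨C', h1, h2⟩ := h'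
    exact ⟨C', h.trans h1, h2⟩

structure NatV (n : ℕ) (V : Vl) : Prop where
  cl : Cl V
  run : NatC n (.app V (.num 0 1))

theorem natV_zero : NatV 0 zeroV := ⟨cl_zeroV, .single (.beta _ _)⟩

theorem natV_succ {n : ℕ} {V : Vl} (h : NatV n V) : NatV (n + 1) (succV V) := by
  refine ⟨cl_succV h.cl, .app V (.num 0 1), ?_, ?_⟩
  · refine .single ?_
    have := HStep.beta (.opc () (.cv ()) (.app (renV Nat.succ (renV Nat.succ V)) (.num 0 1))) (.num 0 1)
    simpa [subst0C, subC, subV, h.cl.ren, h.cl.sub, succV] using this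
  · simpa [subst0C, subC, subV, h.cl.ren, h.cl.sub] using h.run

theorem red_isz {n : ℕ} {V : Vl} (h : NatV n V) :
    Red (isz V) (.ret (.num (if n = 0 then 0 else 1) 2)) := by
  have h := h.run
  cases n with
  | zero => exact (Red.handle _ _ h).tail (.hRet _ _ _)
  | succ n =>
    obtain ⟨C', h1, _⟩ := h
    exact (Red.handle _ _ h1).tail (.hOp _ _ _ _ _)

theorem red_pred_aux {n : ℕ} {M : Cm} (h : NatC n M) :
    ∃ k, Red (.handle PCr (fun _ => PH) M) (.ret k) ∧ Cl k ∧
      NatC n (.app k (.num 1 2)) ∧ NatC (n - 1) (.app k (.num 0 2)) := by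
  induction n generalizing M with
  | zero =>
    refine ⟨.lam (.ret (.cv ())), (Red.handle _ _ h).tail (.hRet _ _ _), cl_zeroV, ?_, ?_⟩
    · exact .single (.beta _ _)
    · exact .single (.beta _ _)
  | succ n ih =>
    obtain ⟨C', h1, h2⟩ := h
    obtain ⟨k, hk, cl, k1, k0⟩ := ih h2
    have key : Red (.handle PCr (fun _ => PH) M)
        (.letin (.ret k) (.ret (.lam (case2 (.var 0) (.app (.var 1) (.num 1 2))
          (.opc () (.cv ()) (.app (.var 2) (.num 1 2))))))) := by
      refine (Red.handle _ _ h1).trans ?_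
      refine (Relation.ReflTransGen.single (.hOp _ _ _ _ _)).trans ?_
      have e : subC (sub2 (contVal PCr (fun _ => PH) C') (.cv ())) PH =
          .letin (.app (.lam (.handle PCr (fun _ => PH) C')) (.num 0 1))
          (.ret (.lam (case2 (.var 0) (.app (.var 1) (.num 1 2))
            (.opc () (.cv ()) (.app (.var 2) (.num 1 2)))))) := by
        simp only [contVal, ren_PCr, ren_PH]
        rw [show PH = .letin (.app (.var 0) (.num 0 1))
          (.ret (.lam (case2 (.var 0) (.app (.var 1) (.num 1 2))
          (.opc () (.cv ()) (.app (.var 2) (.num 1 2)))))) from rfl]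
        simp [subC, subV, sub2, sub_case2, upsH, renV]
      rw [e]
      refine Red.letin _ (.head (.beta _ _) ?_)
      have e2 : subst0C (.num 0 1) (.handle PCr (fun _ => PH) C') =
        .handle PCr (fun _ => PH) (subst0C (.num 0 1) C') := by
        simp only [subst0C, subC, sub_PCr, sub_PH]
      rw [e2]
      exact hk
    have e3 : subst0C k (.ret (.lam (case2 (.var 0) (.app (.var 1) (.num 1 2))
          (.opc () (.cv ()) (.app (.var 2) (.num 1 2)))))) =
        .ret (.lam (case2 (.var 0) (.app k (.num 1 2))
          (.opc () (.cv ()) (.app k (.num 1 2))))) := by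
      simp [subst0C, subC, subV, sub_case2, upsH, cl.ren]
    have hb : ∀ W, HStep (.app (.lam (case2 (.var 0) (.app k (.num 1 2))
          (.opc () (.cv ()) (.app k (.num 1 2))))) W) (case2 W (.app k (.num 1 2))
          (.opc () (.cv ()) (.app k (.num 1 2)))) := by
      intro W
      have := HStep.beta (case2 (.var 0) (.app k (.num 1 2))
          (.opc () (.cv ()) (.app k (.num 1 2)))) W
      simpa [subst0C, subC, subV, sub_case2, cl.sub] using this
    have e4 := HStep.letRet k (.ret (.lam (case2 (.var 0) (.app (.var 1) (.num 1 2))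
          (.opc () (.cv ()) (.app (.var 2) (.num 1 2))))))
    rw [e3] at e4
    refine ⟨_, key.tail e4, ?_, ?_, ?_⟩
    · constructor <;> intro s <;> simp [renV, renC, subV, subC, ren_case2, sub_case2, upr, upsH,
        cl.ren, cl.sub]
    · refine ⟨.app k (.num 1 2), .head (hb _) (.single (step_case2_1 _ _)), ?_⟩
      simpa [subst0C, subC, subV, cl.sub] using k1
    · exact NatC.red (.head (hb _) (.single (step_case2_0 _ _))) k1

theorem natV_pred {n : ℕ} {V : Vl} (h : NatV n V) : NatV (n - 1) (predV V) := by
  refine ⟨cl_predV h.cl, ?_⟩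
  obtain ⟨k, hk, cl, k1, k0⟩ := red_pred_aux h.run
  have h1 : HStep (.app (predV V) (.num 0 1)) (.letin (.handle PCr (fun _ => PH)
      (.app V (.num 0 1))) (.app (.var 0) (.num 0 2))) := by
    have := HStep.beta (.letin (.handle PCr (fun _ => PH) (.app V (.num 0 1)))
      (.app (.var 0) (.num 0 2))) (.num 0 1)
    simpa [subst0C, subC, subV, upsH, h.cl.ren, h.cl.sub, predV, sub_PCr, sub_PH] using this
  refine NatC.red (.head h1 ((Red.letin _ hk).tail (.letRet _ _))) ?_
  exact k0

/-! ### Streams -/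

structure StrV (v : List ℕ) (V : Vl) : Prop where
  cl : Cl V
  run : ∀ n W, NatV n W → ∃ W', Red (.app V W) (.ret W') ∧ NatV (v.getD n 0) W'

theorem headI_eq (v : List ℕ) : v.getD 0 0 = v.headI := by cases v <;> rfl

theorem StrV.head {v : List ℕ} {V : Vl} (h : StrV v V) :
    ∃ W', Red (.app V zeroV) (.ret W') ∧ NatV v.headI W' := by
  rw [← headI_eq]; exact h.run 0 _ natV_zero

theorem strV_zeros : StrV [] zerosV := by
  refine ⟨cl_zerosV, fun n W _ => ⟨zeroV, .single (.beta _ _), ?_⟩⟩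
  simpa using natV_zero

theorem strV_tail {v : List ℕ} {V : Vl} (h : StrV v V) : StrV v.tail (tailV V) := by
  refine ⟨cl_tailV h.cl, fun n W hW => ?_⟩
  obtain ⟨W', h1, h2⟩ := h.run (n + 1) _ (natV_succ hW)
  refine ⟨W', .head ?_ h1, ?_⟩
  · have := HStep.beta (.app V (succV (.var 0))) W
    simpa [subst0C, subC, sub_succV, h.cl.ren, h.cl.sub, tailV] using this
  · cases v <;> simpa using h2

theorem strV_cons {a : ℕ} {v : List ℕ} {A V : Vl} (ha : NatV a A) (h : StrV v V) :
    StrV (a :: v) (consV A V) := by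
  refine ⟨cl_consV ha.cl h.cl, fun n W hW => ?_⟩
  have h1 : HStep (.app (consV A V) W) (.letin (isz W) (case2 (.var 0)
      (.ret A) (.app V (predV W)))) := by
    have := HStep.beta (.letin (isz (.var 0)) (case2 (.var 0)
      (.ret A) (.app V (predV (.var 1))))) W
    simpa [subst0C, subC, subV, sub_isz, sub_case2, sub_predV, h.cl.ren, h.cl.sub, ha.cl.ren,
      ha.cl.sub, consV, upsH, hW.cl.ren] using this
  have h2 : Red (.app (consV A V) W) (case2 (.num (if n = 0 then 0 else 1) 2)
      (.ret A) (.app V (predV W))) := by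
    refine .head h1 ((Red.letin _ (red_isz hW)).trans (.single ?_))
    have := HStep.letRet (.num (if n = 0 then 0 else 1) 2) (case2 (.var 0)
      (.ret A) (.app V (predV W)))
    simpa [subst0C, subC, subV, sub_case2, (cl_predV hW.cl).sub, h.cl.sub, ha.cl.sub] using this
  cases n with
  | zero => exact ⟨A, h2.tail (step_case2_0 _ _), by simpa using ha⟩
  | succ n =>
    obtain ⟨W', h3, h4⟩ := h.run n _ (natV_pred hW)
    exact ⟨W', (h2.tail (step_case2_1 _ _)).trans h3, by simpa using h4⟩

end HEPCF

namespace HEPCF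

open Turing.ToPartrec

/-! ### Translation of codes -/

/-- last part of the translation of `cons` -/
def consRest (a : Vl) : Cm := .letin (.app a zeroV) (.ret (consV (.var 0) (.var 1)))

/-- loop test of the translation of `fix` -/
def fixRest (self : Vl) : Cm :=
  .letin (.app (.var 0) zeroV) (.letin (isz (.var 0)) (case2 (.var 0) (.ret (tailV (.var 2)))
    (.app self (tailV (.var 2)))))

/-- Translation of codes to closed values of type `Str → Str`. -/
def tr : Code → Vl
  | .zero' => .lam (.ret (consV zeroV (.var 0)))
  | .succ => .lam (.letin (.app (.var 0) zeroV) (.letin (.ret (succV (.var 0)))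
      (.ret (consV (.var 0) zerosV))))
  | .tail => .lam (.ret (tailV (.var 0)))
  | .cons f fs => .lam (.letin (.app (tr f) (.var 0)) (.letin (.app (tr fs) (.var 1))
      (consRest (.var 1))))
  | .comp f g => .lam (.letin (.app (tr g) (.var 0)) (.app (tr f) (.var 0)))
  | .case f g => .lam (.letin (.app (.var 0) zeroV) (.letin (isz (.var 0)) (case2 (.var 0)
      (.app (tr f) (tailV (.var 2)))
      (.letin (.ret (predV (.var 1))) (.letin (.ret (tailV (.var 3)))
        (.app (tr g) (consV (.var 1) (.var 0))))))))
  | .fix f => .fixv (.lam (.letin (.app (tr f) (.var 0)) (fixRest (.var 4))))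

theorem sub_consV_var (s : ℕ → Vl) (a b : ℕ) :
    subV s (consV (.var a) (.var b)) = consV (s a) (s b) := sub_consV s _ _ rfl rfl
theorem ren_consV_var (s : ℕ → ℕ) (a b : ℕ) :
    renV s (consV (.var a) (.var b)) = consV (.var (s a)) (.var (s b)) := ren_consV s _ _ rfl rfl

theorem sub_consV_z (s : ℕ → Vl) (b : ℕ) :
    subV s (consV zeroV (.var b)) = consV zeroV (s b) := sub_consV s _ _ rfl rfl
theorem ren_consV_z (s : ℕ → ℕ) (b : ℕ) :
    renV s (consV zeroV (.var b)) = consV zeroV (.var (s b)) := ren_consV s _ _ rfl rfl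

theorem sub_consV_s (s : ℕ → Vl) (a : ℕ) :
    subV s (consV (.var a) zerosV) = consV (s a) zerosV := sub_consV s _ _ rfl rfl
theorem ren_consV_s (s : ℕ → ℕ) (a : ℕ) :
    renV s (consV (.var a) zerosV) = consV (.var (s a)) zerosV :=
  ren_consV s _ _ rfl rfl

attribute [local simp] renV renC subV subC upr upsH sub_consV_var ren_consV_var sub_consV_z
  ren_consV_z sub_consV_s ren_consV_s ren_tailV sub_tailV ren_predV sub_predV ren_isz sub_isz
  ren_succV sub_succV ren_case2 sub_case2 subst0C

@[local simp] theorem ren_zeroV (ρ : ℕ → ℕ) : renV ρ zeroV = zeroV := rfl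
@[local simp] theorem sub_zeroV (ρ : ℕ → Vl) : subV ρ zeroV = zeroV := rfl

theorem cl_tr (c : Code) : Cl (tr c) := by
  induction c with
  | zero' => constructor <;> intro s <;> simp [tr]
  | succ => constructor <;> intro s <;> simp [tr]
  | tail => constructor <;> intro s <;> simp [tr]
  | cons f fs hf hfs =>
    constructor <;> intro s <;> simp [tr, consRest, hf.ren, hf.sub, hfs.ren, hfs.sub]
  | comp f g hf hg => constructor <;> intro s <;> simp [tr, hf.ren, hf.sub, hg.ren, hg.sub]
  | case f g hf hg => constructor <;> intro s <;> simp [tr, hf.ren, hf.sub, hg.ren, hg.sub]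
  | fix f hf => constructor <;> intro s <;> simp [tr, fixRest, hf.ren, hf.sub]

attribute [local simp] Cl.ren Cl.sub
@[local simp] theorem ren_tr (ρ : ℕ → ℕ) (c : Code) : renV ρ (tr c) = tr c := (cl_tr c).ren ρ
@[local simp] theorem sub_tr (ρ : ℕ → Vl) (c : Code) : subV ρ (tr c) = tr c := (cl_tr c).sub ρ

/-! ### Simulation -/

/-- Evaluation contexts representing continuations. -/
inductive Ctx : Cont → (Cm → Cm) → Prop
  | halt : Ctx .halt (fun M => .letin M (.ret (.cv ())))
  | cons₁ {fs v k K V} : Ctx k K → StrV v V → Ctx (.cons₁ fs v k)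
      (fun M => K (.letin M (.letin (.app (tr fs) V) (consRest (.var 1)))))
  | cons₂ {ns k K V} : Ctx k K → StrV ns V → Ctx (.cons₂ ns k)
      (fun M => K (.letin M (consRest V)))
  | comp {f k K} : Ctx k K → Ctx (.comp f k) (fun M => K (.letin M (.app (tr f) (.var 0))))
  | fix {f k K} : Ctx k K → Ctx (.fix f k) (fun M => K (.letin M (fixRest (tr (.fix f)))))

theorem Ctx.redP {k K} (h : Ctx k K) {C D : Cm} (hr : RedP C D) : RedP (K C) (K D) := by
  induction h generalizing C D with
  | halt => exact hr.letin _
  | cons₁ _ _ ih => exact ih (hr.letin _)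
  | cons₂ _ _ ih => exact ih (hr.letin _)
  | comp _ ih => exact ih (hr.letin _)
  | fix _ ih => exact ih (hr.letin _)

theorem Ctx.red {k K} (h : Ctx k K) {C D : Cm} (hr : Red C D) : Red (K C) (K D) := by
  rcases Relation.reflTransGen_iff_eq_or_transGen.1 hr with e | hr
  · subst e; exact .refl
  · exact (h.redP hr).to_reflTransGen

/-- Terms representing machine configurations. -/
inductive CfgRep : Cfg → Cm → Prop
  | halt {v} : CfgRep (.halt v) (.ret (.cv ()))
  | ret {k K v V} : Ctx k K → StrV v V → CfgRep (.ret k v) (K (.ret V))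

/-- Evaluating `M` in `let` and then continuing. -/
theorem red_let {M B D : Cm} {V : Vl} (h : Red M (.ret V)) (h' : Red (subst0C V B) D) :
    Red (.letin M B) D :=
  (h.letin _).trans (.head (.letRet _ _) h')

theorem red_beta {B D : Cm} {V : Vl} (h' : Red (subst0C V B) D) : Red (.app (.lam B) V) D :=
  .head (.beta _ _) h'

theorem sub_consV_cl {a : Vl} (h : Cl a) (s : ℕ → Vl) (b : ℕ) :
    subV s (consV a (.var b)) = consV a (s b) := by
  rw [sub_consV s a (.var b) (by simp [h.ren, h.sub]) rfl, h.sub]; rfl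

theorem sub_consV_cl' {a : Vl} (h : Cl a) (s : ℕ → Vl) (b : ℕ) :
    subV s (consV (.var b) a) = consV (s b) a := by
  rw [sub_consV s (.var b) a rfl (by simp [h.ren, h.sub]), h.sub]; rfl

theorem acc_of_red {T N : Cm} (hN : NF N) (h : Red T N) : Acc (Function.swap HStep) T := by
  induction h using Relation.ReflTransGen.head_induction_on with
  | refl => exact ⟨_, fun y hy => absurd hy (hN y)⟩
  | head h1 _ ih => exact ⟨_, fun y hy => by rw [HStep.det hy h1]; exact ih⟩

theorem sim_normal (c : Code) {k : Cont} {K : Cm → Cm} {v : List ℕ} {V : Vl}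
    (hk : Ctx k K) (hv : StrV v V) :
    ∃ T, Red (K (.app (tr c) V)) T ∧ CfgRep (stepNormal c k v) T := by
  have hc := hv.cl
  induction c generalizing k K v V with
  | zero' =>
    refine ⟨_, hk.red ?_, .ret hk (strV_cons natV_zero hv)⟩
    exact .single (by simpa [tr] using HStep.beta (.ret (consV zeroV (.var 0))) V)
  | succ =>
    obtain ⟨W, hW, hN⟩ := hv.head
    refine ⟨_, hk.red ?_, .ret hk (strV_cons (natV_succ hN) strV_zeros)⟩
    refine red_beta ?_
    simp only [subst0C, subC, subV, sub_zeroV]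
    refine red_let hW ?_
    have := cl_succV hN.cl
    simpa [hN.cl.ren] using red_let (M := .ret (succV W)) (B := .ret (consV (.var 0) zerosV))
      .refl .refl
  | tail =>
    refine ⟨_, hk.red ?_, .ret hk (strV_tail hv)⟩
    exact .single (by simpa [tr] using HStep.beta (.ret (tailV (.var 0))) V)
  | cons f fs hf hfs =>
    obtain ⟨T, h1, h2⟩ := hf (.cons₁ (fs := fs) hk hv) hv hc
    refine ⟨T, (hk.red (red_beta ?_)).trans h1, h2⟩
    simp [consRest, hc.ren]
    exact .refl
  | comp f g hf hg =>
    obtain ⟨T, h1, h2⟩ := hg (.comp (f := f) hk) hv hc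
    refine ⟨T, (hk.red (red_beta ?_)).trans h1, h2⟩
    simp
    exact .refl
  | case f g hf hg =>
    obtain ⟨W, hW, hN⟩ := hv.head
    have key : Red (.app (tr (.case f g)) V) (case2 (.num (if v.headI = 0 then 0 else 1) 2)
        (.app (tr f) (tailV V))
        (.letin (.ret (predV W)) (.letin (.ret (tailV V))
        (.app (tr g) (consV (.var 1) (.var 0)))))) := by
      refine red_beta ?_
      simp [hc.ren]
      refine red_let hW ?_
      simp [(cl_tailV hc).sub, hN.cl.ren]
      refine red_let (red_isz hN) ?_
      simp [(cl_tailV hc).sub, (cl_predV hN.cl).sub]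
      exact .refl
    cases hh : v.headI with
    | zero =>
      rw [hh] at key
      obtain ⟨T, h1, h2⟩ := hf hk (strV_tail hv) (cl_tailV hc)
      refine ⟨T, (hk.red (key.tail (step_case2_0 _ _))).trans h1, ?_⟩
      simpa [stepNormal, hh] using h2
    | succ y =>
      rw [hh] at key hN
      obtain ⟨T, h1, h2⟩ := hg hk (strV_cons (natV_pred hN) (strV_tail hv))
        (cl_consV (cl_predV hN.cl) (cl_tailV hc))
      refine ⟨T, (hk.red ((key.tail (step_case2_1 _ _)).trans ?_)).trans h1, ?_⟩
      · refine red_let .refl ?_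
        simp [(cl_tailV hc).sub]
        refine red_let .refl ?_
        simp [(cl_predV hN.cl).ren]
        rw [sub_consV_cl (cl_predV hN.cl)]
      · simpa [stepNormal, hh] using h2
  | fix f hf =>
    obtain ⟨T, h1, h2⟩ := hf (.fix (f := f) hk) hv hc
    refine ⟨T, (hk.red (.head (.fix _ _) ?_)).trans h1, h2⟩
    have hcl := cl_tr (.fix f)
    have e : ∀ s, subV s (.lam (.letin (.app (tr f) (.var 0)) (fixRest (.var 4)))) =
        .lam (.letin (.app (tr f) (.var 0)) (fixRest
          (renV Nat.succ (renV Nat.succ (renV Nat.succ (renV Nat.succ (s 0))))))) := by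
      intro s; simp [fixRest]
    rw [subst0V, e]
    refine red_beta ?_
    change Red (subst0C V (.letin (.app (tr f) (.var 0)) (fixRest
          (renV Nat.succ (renV Nat.succ (renV Nat.succ (renV Nat.succ (tr (.fix f))))))))) _
    simp only [ren_tr]
    simp [fixRest]
    exact .refl

theorem sim_ret {k : Cont} {K : Cm → Cm} {v : List ℕ} {V : Vl}
    (hk : Ctx k K) (hv : StrV v V) :
    ∃ T, RedP (K (.ret V)) T ∧ CfgRep (stepRet k v) T := by
  induction hk generalizing v V with
  | halt => exact ⟨_, .single (.letRet _ _), .halt⟩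
  | @cons₁ fs as k K A hk ha ih =>
    obtain ⟨T, h1, h2⟩ := sim_normal fs (.cons₂ hk hv) ha
    refine ⟨T, .trans_left (hk.redP (.single (.letRet _ _))) ?_, h2⟩
    simpa [consRest, ha.cl.sub, hv.cl.ren] using h1
  | @cons₂ ns k K A hk ha ih =>
    obtain ⟨W, hW, hN⟩ := ha.head
    obtain ⟨T, h1, h2⟩ := ih (strV_cons hN hv)
    refine ⟨T, .trans_right (hk.red ?_) h1, h2⟩
    refine red_let .refl ?_
    simp only [consRest, subst0C, subC, ha.cl.sub, sub_zeroV]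
    refine red_let hW ?_
    simp [hv.cl.ren]
    rw [sub_consV_cl' hv.cl]
  | @comp f k K hk ih =>
    obtain ⟨T, h1, h2⟩ := sim_normal f hk hv
    refine ⟨T, .trans_left (hk.redP (.single (.letRet _ _))) ?_, h2⟩
    simpa using h1
  | @fix f k K hk ih =>
    obtain ⟨W, hW, hN⟩ := hv.head
    have hc := hv.cl
    have key : RedP (.letin (.ret V) (fixRest (tr (.fix f))))
        (case2 (.num (if v.headI = 0 then 0 else 1) 2) (.ret (tailV V))
          (.app (tr (.fix f)) (tailV V))) := by
      refine .trans_left (.single (.letRet _ _)) ?_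
      simp [fixRest, hc.ren]
      refine red_let hW ?_
      simp [(cl_tailV hc).sub]
      refine red_let (red_isz hN) ?_
      simp [(cl_tailV hc).sub]
      exact .refl
    by_cases hh : v.headI = 0
    · rw [if_pos hh] at key
      obtain ⟨T, h1, h2⟩ := ih (strV_tail hv)
      refine ⟨T, (hk.redP (key.tail (step_case2_0 _ _))).trans h1, ?_⟩
      simpa [stepRet, hh] using h2
    · rw [if_neg hh] at key
      obtain ⟨T, h1, h2⟩ := sim_normal (.fix f) hk (strV_tail hv)
      refine ⟨T, (hk.redP (key.tail (step_case2_1 _ _))).trans_left h1, ?_⟩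
      simpa [stepRet, hh, stepNormal] using h2

/-- Adequacy of the simulation. -/
theorem sim_halts {c : Cfg} {T : Cm} (h : CfgRep c T) :
    Red T (.ret (.cv ())) ↔ (StateTransition.eval step c).Dom := by
  constructor
  · intro hr
    have hacc := (acc_of_red (nf_ret _) hr).transGen
    induction hacc generalizing c with
    | intro T _ ih =>
      cases h with
      | halt =>
        exact Part.dom_iff_mem.2 ⟨_, StateTransition.mem_eval.2 ⟨.refl, rfl⟩⟩
      | @ret k K v V hk hv =>
        obtain ⟨T', h3, h4⟩ := sim_ret hk hv
        rw [StateTransition.reaches_eval (b := stepRet k v)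
          (Relation.ReflTransGen.single (by simp [step]))]
        exact ih T' (Relation.transGen_swap.2 h3) h4
          (Red.conf (nf_ret _) hr h3.to_reflTransGen)
  · intro hd
    obtain ⟨b, hb0⟩ := Part.dom_iff_mem.1 hd
    obtain ⟨hr, hb⟩ := StateTransition.mem_eval.1 hb0
    clear hd hb0
    induction hr using Relation.ReflTransGen.head_induction_on generalizing T with
    | refl =>
      cases h with
      | halt => exact .refl
      | ret => exact absurd hb (by simp [step])
    | head h1 h2 ih =>
      cases h with
      | halt => simp [step] at h1
      | ret hk hv =>
        obtain ⟨T', h3, h4⟩ := sim_ret hk hv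
        simp [step] at h1
        subst h1
        exact h3.to_reflTransGen.trans (ih h4)

end HEPCF

namespace HEPCF

open Turing.ToPartrec

/-! ### Typing -/

abbrev VT (Γ : List (HTy Unit Unit)) (V : Vl) (T : HTy Unit Unit) : Prop :=
  HVTy cvTyU opParU opArU Γ V T
abbrev CT (Γ : List (HTy Unit Unit)) (C : Cm) (T : HTy Unit Unit) : Prop :=
  HCTy cvTyU opParU opArU Γ Set.univ C T

abbrev BT : HTy Unit Unit := .base ()
abbrev NT : HTy Unit Unit := .arr (.enum 1) Set.univ BT
abbrev ST : HTy Unit Unit := .arr NT Set.univ NT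

theorem ty_cv (Γ) : VT Γ (.cv ()) BT := .cv ()

theorem ty_case2 {Γ V A B T} (hV : VT Γ V (.enum 2)) (hA : CT Γ A T) (hB : CT Γ B T) :
    CT Γ (case2 V A B) T := by
  refine .case hV fun i => ?_
  fin_cases i
  · exact hA
  · exact hB

theorem ty_zeroV (Γ) : VT Γ zeroV NT := .lam (.ret (.cv ()))

theorem ty_zerosV (Γ) : VT Γ zerosV ST := .lam (.ret (ty_zeroV _))

theorem ty_succV {Γ n} (h : Γ[n]? = some NT) : VT Γ (succV (.var n)) NT :=
  .lam (.opc trivial (.cv ()) (.app (.var (T := NT) (by simpa using h)) (.num (by decide))))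

theorem ty_isz {Γ a} (h : VT Γ a NT) : CT Γ (isz a) (.enum 2) :=
  .handle (E' := Set.univ) (.app h (.num (by decide))) (.ret (.num (by decide)))
    (fun _ _ => .ret (.num (by decide)))

theorem ty_predV {Γ n} (h : Γ[n]? = some NT) : VT Γ (predV (.var n)) NT := by
  refine .lam (.letin (T := .arr (.enum 2) Set.univ BT) (.handle (E' := Set.univ) (U := BT)
    (.app (.var (T := NT) (by simpa using h)) (.num (by decide))) ?_ ?_) ?_)
  · exact .ret (.lam (.ret (.cv ())))
  · intro s _
    refine .letin (T := .arr (.enum 2) Set.univ BT) (.app (T := .enum 1) (.var rfl)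
      (.num (by decide))) (.ret (.lam (ty_case2 (.var rfl) ?_ ?_)))
    · exact .app (T := .enum 2) (.var rfl) (.num (by decide))
    · exact .opc trivial (.cv ()) (.app (T := .enum 2) (.var rfl) (.num (by decide)))
  · exact .app (T := .enum 2) (.var rfl) (.num (by decide))

theorem ty_consV {Γ a b} (ha : ∀ X Y, VT (X :: Y :: Γ) (renV Nat.succ (renV Nat.succ a)) NT)
    (hb : ∀ X Y, VT (X :: Y :: Γ) (renV Nat.succ (renV Nat.succ b)) ST) :
    VT Γ (consV a b) ST :=
  .lam (.letin (ty_isz (.var rfl)) (ty_case2 (.var rfl) (.ret (ha _ _))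
    (.app (hb _ _) (ty_predV rfl))))

theorem ty_tailV {Γ n} (h : Γ[n]? = some ST) : VT Γ (tailV (.var n)) ST :=
  .lam (.app (.var (T := ST) (by simpa using h)) (ty_succV rfl))

theorem ty_tr (c : Code) (Γ) : VT Γ (tr c) (.arr ST Set.univ ST) := by
  induction c generalizing Γ with
  | zero' => exact .lam (.ret (ty_consV (fun _ _ => ty_zeroV _) (fun _ _ => .var rfl)))
  | succ =>
    exact .lam (.letin (T := NT) (.app (T := NT) (.var rfl) (ty_zeroV _))
      (.letin (.ret (ty_succV rfl))
      (.ret (ty_consV (fun _ _ => .var rfl) (fun _ _ => ty_zerosV _)))))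
  | tail => exact .lam (.ret (ty_tailV rfl))
  | cons f fs hf hfs =>
    exact .lam (.letin (.app (hf _) (.var rfl)) (.letin (.app (hfs _) (.var rfl))
      (.letin (T := NT) (.app (T := NT) (.var rfl) (ty_zeroV _))
      (.ret (ty_consV (fun _ _ => .var rfl) (fun _ _ => .var rfl))))))
  | comp f g hf hg => exact .lam (.letin (.app (hg _) (.var rfl)) (.app (hf _) (.var rfl)))
  | case f g hf hg =>
    exact .lam (.letin (T := NT) (.app (T := NT) (.var rfl) (ty_zeroV _))
      (.letin (ty_isz (.var rfl)) (ty_case2 (.var rfl) (.app (hf _) (ty_tailV rfl))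
      (.letin (.ret (ty_predV rfl)) (.letin (.ret (ty_tailV rfl))
        (.app (hg _) (ty_consV (fun _ _ => .var rfl) (fun _ _ => .var rfl))))))))
  | fix f hf =>
    exact .fixv (.lam (.letin (.app (hf _) (.var rfl))
      (.letin (T := NT) (.app (T := NT) (.var rfl) (ty_zeroV _))
      (.letin (ty_isz (.var rfl)) (ty_case2 (.var rfl) (.ret (ty_tailV rfl))
      (.app (T := ST) (.var rfl) (ty_tailV rfl)))))))

/-! ### The reduction -/

/-- body of the numeral `n` -/
def numC : ℕ → Cm
  | 0 => .ret (.cv ())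
  | n + 1 => .opc () (.cv ()) (numC n)

def numV (n : ℕ) : Vl := .lam (numC n)

theorem ren_numC (n : ℕ) (ρ : ℕ → ℕ) : renC ρ (numC n) = numC n := by
  induction n generalizing ρ with
  | zero => rfl
  | succ n ih => simp [numC, renC, renV, ih]

theorem sub_numC (n : ℕ) (s : ℕ → Vl) : subC s (numC n) = numC n := by
  induction n generalizing s with
  | zero => rfl
  | succ n ih => simp [numC, subC, subV, ih]

theorem cl_numV (n : ℕ) : Cl (numV n) :=
  ⟨fun ρ => by simp [numV, renV, ren_numC], fun ρ => by simp [numV, subV, sub_numC]⟩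

theorem natC_numC (n : ℕ) : NatC n (numC n) := by
  induction n with
  | zero => exact .refl
  | succ n ih => exact ⟨_, .refl, by rw [subst0C, sub_numC]; exact ih⟩

theorem natV_numV (n : ℕ) : NatV n (numV n) :=
  ⟨cl_numV n, NatC.red (.single (.beta _ _)) (by rw [subst0C, sub_numC]; exact natC_numC n)⟩

theorem ty_numC (n : ℕ) (Γ) : CT Γ (numC n) BT := by
  induction n generalizing Γ with
  | zero => exact .ret (.cv ())
  | succ n ih => exact .opc trivial (.cv ()) (ih _)

/-- Function running the code `c` on a singleton list. -/
def runF (c : Code) : Vl :=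
  .lam (.letin (.app (tr c) (consV (.var 0) zerosV)) (.ret (.cv ())))

def prog (c : Code) (n : ℕ) : Cm := .app (runF c) (numV n)

theorem ty_prog (c : Code) (n : ℕ) : CT [] (prog c n) BT :=
  .app (T := NT) (.lam (.letin (.app (ty_tr c _) (ty_consV (fun _ _ => .var rfl)
    (fun _ _ => ty_zerosV _))) (.ret (.cv ())))) (.lam (ty_numC n _))

theorem prog_halts (c : Code) (n : ℕ) : Red (prog c n) (.ret (.cv ())) ↔ (c.eval [n]).Dom := by
  have h1 : HStep (prog c n) (.letin (.app (tr c) (consV (numV n) zerosV)) (.ret (.cv ()))) := by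
    have := HStep.beta (.letin (.app (tr c) (consV (.var 0) zerosV)) (.ret (.cv ()))) (numV n)
    simpa [subst0C, subC, subV, sub_tr, sub_consV_s, prog, runF] using this
  obtain ⟨T, h2, h3⟩ := sim_normal c Ctx.halt (strV_cons (natV_numV n) strV_zeros)
  have h4 := sim_halts h3
  rw [stepNormal_eval] at h4
  have h5 : (Cfg.halt <$> c.eval [n]).Dom ↔ (c.eval [n]).Dom := Iff.rfl
  rw [← h5, ← h4]
  exact ⟨fun h => Red.conf (nf_ret _) h (.head h1 h2), fun h => (Relation.ReflTransGen.head h1 h2).trans h⟩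

/-- Automaton accepting exactly the tree consisting of the leaf returning `()`. -/
def autA : APTCode where
  qI := 0
  δ := [((0, Nat.pair 2 (Nat.pair 0 0)), .tt)]
  Ω := []

theorem encV_cv {V : Vl} (h : encV V = Nat.pair 0 0) : V = .cv () := by
  cases V <;> simp [encV] at h ⊢

theorem accepts_iff (C : Cm) :
    APT.Accepts arH autA.toAPT (ETF C) ↔ Red C (.ret (.cv ())) := by
  classical
  constructor
  · rintro ⟨R, ⟨h0, h⟩, -⟩
    obtain ⟨f, S, h1, -, h2, -⟩ := h [] h0
    simp only [APTCode.toAPT, autA, APT.stateOf, List.lookup] at h2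
    simp only [ETF, List.map_nil] at h1
    split_ifs at h1 with hl
    have hs := hl.choose_spec
    rw [Option.some.inj h1] at hs
    have hf : encLab f = Nat.pair 2 (Nat.pair 0 0) := by
      by_contra hne
      have : ((0, encLab f) == ((0, Nat.pair 2 (Nat.pair 0 0)) : ℕ × ℕ)) = false := by
        simpa using hne
      simp [this, PBF.Sat] at h2
    cases hs with
    | retn hr =>
      simp only [encLab, Nat.pair_eq_pair, true_and] at hf
      rw [encV_cv hf] at hr
      exact hr
    | opHead hr => simp [encLab] at hf
  · intro hr
    have hl : ∃ l, ETAt opArU C [] l := ⟨_, .retn hr⟩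
    have ht : ETF C [] = some (some (.retl (.cv ()))) := by
      simp only [ETF]
      rw [dif_pos hl]
      have hs := hl.choose_spec
      congr 1
      generalize hl.choose = l at hs
      cases hs with
      | bot hd => exact absurd (hd _ hr) (by rintro ⟨D, h⟩; exact nf_ret _ _ h)
      | retn h => cases Red.nf_unique (nf_ret _) (nf_ret _) hr h; rfl
      | opHead h => cases Red.nf_unique (nf_ret _) (nf_opc _ _ _) hr h
    refine ⟨{[]}, ⟨rfl, ?_⟩, ?_⟩
    · rintro r rfl
      refine ⟨_, ∅, ht, by simp, ?_, by simp⟩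
      simp [APTCode.toAPT, autA, APT.stateOf, List.lookup, encLab, encV, PBF.Sat]
    · intro b hb
      have := hb 1
      simp at this

theorem computable_enc (c : Code) : Computable fun n => encC (prog c n) := by
  have h : Primrec fun n => encC (numC n) := by
    have : Primrec (Nat.rec (motive := fun _ => ℕ) (encC (numC 0))
        (fun _ (r : ℕ) => Nat.pair 8 (Nat.pair (Nat.pair 0 0) r))) := by
      apply Primrec.nat_rec₁
      exact (Primrec₂.natPair.comp (Primrec.const 8)
        (Primrec₂.natPair.comp (Primrec.const _) Primrec.snd)).to₂
    refine this.of_eq fun n => ?_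
    induction n with
    | zero => rfl
    | succ n ih => simp only [numC, encC, encV, ← ih]
  have h2 : Primrec fun n => Nat.pair 5 (Nat.pair (encV (runF c)) (Nat.pair 3 (encC (numC n)))) :=
    Primrec₂.natPair.comp (Primrec.const 5) (Primrec₂.natPair.comp (Primrec.const _)
      (Primrec₂.natPair.comp (Primrec.const 3) h))
  exact (h2.of_eq fun n => by simp [prog, encC, encV, numV]).to_comp

/-- There is a code whose halting set decides the halting problem. -/
theorem exists_universal : ∃ U : Code, ∀ c : Nat.Partrec.Code,
    (U.eval [Encodable.encode c]).Dom ↔ (Nat.Partrec.Code.eval c 0).Dom := by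
  have hp : Partrec fun n : ℕ => Nat.Partrec.Code.eval (Denumerable.ofNat Nat.Partrec.Code n) 0 :=
    Nat.Partrec.Code.eval_part.comp (Computable.ofNat _) (Computable.const 0)
  obtain ⟨U, hU⟩ := Code.exists_code (Nat.Partrec'.part_iff₁.2 hp)
  refine ⟨U, fun c => ?_⟩
  have := hU (Encodable.encode c ::ᵥ List.Vector.nil)
  have e : U.eval [Encodable.encode c] = _ := this
  rw [e]
  simp

end HEPCF

open HEPCF in
/-- MSO (APT) model-checking of effect trees generated by closed HEPCF
computations is undecidable: no computable function, given (the codes of) a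
closed well-typed HEPCF computation `C` and an alternating parity tree
automaton `A`, decides whether the effect tree of `C` is accepted by `A`. -/
theorem hepcf_model_checking_undecidable :
    ¬ ∃ f : ℕ → Bool, Computable f ∧
      ∀ (C : HComp Unit Unit) (A : APTCode),
        HCTy cvTyU opParU opArU [] Set.univ C (.base ()) →
        (f (Nat.pair (encC C) (encAPT A)) = true ↔
          APT.Accepts arH A.toAPT (ETF C)) := by
  rintro ⟨f, hf, h⟩
  obtain ⟨U, hU⟩ := exists_universal
  refine ComputablePred.halting_problem 0 (ComputablePred.computable_iff.2
    ⟨fun c => f (Nat.pair (encC (prog U (Encodable.encode c))) (encAPT autA)), ?_, ?_⟩)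
  · exact hf.comp (Primrec₂.natPair.to_comp.comp
      ((computable_enc U).comp Computable.encode) (Computable.const _))
  · funext c
    rw [h _ autA (ty_prog U _), accepts_iff, prog_halts, hU]
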